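/- arXiv:2010.02028 — 2 statements merged into one kernel-verified Lean document; each statement's English description precedes it below -/
import Mathlib

section
/- For the Schwarzschild data, the Hamiltonian four-form −(1/2) Σ_{a,b,c} ω^{a}{}_{c} ∧ ω^{cb} ∧ S_{ab} equals −sin θ · dt ∧ dr ∧ dθ ∧ dφ on U. Explicitly, at every point of U, −(1/4) Σ_{τ ∈ S₄} sgn(τ) Σ_{a,b,c,d,e} ω_{τ(0)}^{a}{}_{c} · ω_{τ(1)}^{cb} · ε_{abde} · E^d_{τ(2)} · E^e_{τ(3)} = −sin θ, where S₄ is the group of permutations of the coordinate indices {0,1,2,3} = (t,r,θ,φ). -/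
open scoped BigOperators

/-- Minkowski metric diag(1,-1,-1,-1) on index set {0,1,2,3}. -/
noncomputable def eta (a b : Fin 4) : ℝ :=
  if a = b then (if a = 0 then 1 else -1) else 0

/-- Levi-Civita symbol ε_{abcd} on {0,1,2,3}. -/
noncomputable def eps (a b c d : Fin 4) : ℝ :=
  ∑ σ : Equiv.Perm (Fin 4),
    if ![a, b, c, d] = ⇑σ then ((Equiv.Perm.sign σ : ℤ) : ℝ) else 0

/-- Partial derivative in the μ-th coordinate direction of ℝ⁴. -/
noncomputable def pd (μ : Fin 4) (F : (Fin 4 → ℝ) → ℝ) (x : Fin 4 → ℝ) : ℝ :=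
  fderiv ℝ F x (Pi.single μ 1)

/-- f(r) = √(1 − 2Gm/r); the coordinates are x = (t,r,θ,φ). -/
noncomputable def fS (G m : ℝ) (x : Fin 4 → ℝ) : ℝ :=
  Real.sqrt (1 - 2 * G * m / x 1)

/-- The Schwarzschild chart U = {r > 2Gm, r > 0, 0 < θ < π}. -/
def Uchart (G m : ℝ) : Set (Fin 4 → ℝ) :=
  {x | 2 * G * m < x 1 ∧ 0 < x 1 ∧ 0 < x 2 ∧ x 2 < Real.pi}

/-- The Schwarzschild vierbein E^a_μ: E⁰_t = f, E¹_r = 1/f, E²_θ = r,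
E³_φ = r sin θ, all other components zero. -/
noncomputable def Evb (G m : ℝ) (x : Fin 4 → ℝ) : Fin 4 → Fin 4 → ℝ :=
  ![![fS G m x, 0, 0, 0],
    ![0, (fS G m x)⁻¹, 0, 0],
    ![0, 0, x 1, 0],
    ![0, 0, 0, x 1 * Real.sin (x 2)]]

/-- The Schwarzschild spin connection ω_μ^{ab}, antisymmetric in (a,b), with
nonzero components ω_t^{01} = −Gm/r², ω_θ^{12} = f, ω_φ^{13} = f sin θ,
ω_φ^{23} = cos θ (indexed as `sw G m x μ a b`). -/
noncomputable def sw (G m : ℝ) (x : Fin 4 → ℝ) : Fin 4 → Fin 4 → Fin 4 → ℝ :=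
  ![![![0, -(G * m) / (x 1) ^ 2, 0, 0],
     ![(G * m) / (x 1) ^ 2, 0, 0, 0],
     ![0, 0, 0, 0],
     ![0, 0, 0, 0]],
    ![![0, 0, 0, 0], ![0, 0, 0, 0], ![0, 0, 0, 0], ![0, 0, 0, 0]],
    ![![0, 0, 0, 0],
     ![0, 0, fS G m x, 0],
     ![0, -fS G m x, 0, 0],
     ![0, 0, 0, 0]],
    ![![0, 0, 0, 0],
     ![0, 0, 0, fS G m x * Real.sin (x 2)],
     ![0, 0, 0, Real.cos (x 2)],
     ![0, -(fS G m x * Real.sin (x 2)), -Real.cos (x 2), 0]]]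

/-- The index-lowered spin connection ω_μ^a{}_c = Σ_b ω_μ^{ab} η_{bc}. -/
noncomputable def swl (G m : ℝ) (x : Fin 4 → ℝ) (μ a c : Fin 4) : ℝ :=
  ∑ b : Fin 4, sw G m x μ a b * eta b c

/-- Torsion components T^a_{μν} of the Schwarzschild data. -/
noncomputable def Tor (G m : ℝ) (x : Fin 4 → ℝ) (a μ ν : Fin 4) : ℝ :=
  pd μ (fun y => Evb G m y a ν) x - pd ν (fun y => Evb G m y a μ) x
    + ∑ c : Fin 4, (swl G m x μ a c * Evb G m x c ν - swl G m x ν a c * Evb G m x c μ)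

/-- Curvature components R^{ab}_{μν} of the Schwarzschild spin connection. -/
noncomputable def Rcurv (G m : ℝ) (x : Fin 4 → ℝ) (a b μ ν : Fin 4) : ℝ :=
  pd μ (fun y => sw G m y ν a b) x - pd ν (fun y => sw G m y μ a b) x
    + ∑ c : Fin 4, (swl G m x μ a c * sw G m x ν c b - swl G m x ν a c * sw G m x μ c b)

/-- Closed form of the Levi-Civita symbol. -/
def epsZ (a b c d : Fin 4) : ℤ :=
  ((![![0, 1, 1, 1], ![-1, 0, 1, 1], ![-1, -1, 0, 1], ![-1, -1, -1, 0]] :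
    Fin 4 → Fin 4 → ℤ) a b) *
  ((![![0, 1, 1, 1], ![-1, 0, 1, 1], ![-1, -1, 0, 1], ![-1, -1, -1, 0]] :
    Fin 4 → Fin 4 → ℤ) a c) *
  ((![![0, 1, 1, 1], ![-1, 0, 1, 1], ![-1, -1, 0, 1], ![-1, -1, -1, 0]] :
    Fin 4 → Fin 4 → ℤ) a d) *
  ((![![0, 1, 1, 1], ![-1, 0, 1, 1], ![-1, -1, 0, 1], ![-1, -1, -1, 0]] :
    Fin 4 → Fin 4 → ℤ) b c) *
  ((![![0, 1, 1, 1], ![-1, 0, 1, 1], ![-1, -1, 0, 1], ![-1, -1, -1, 0]] :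
    Fin 4 → Fin 4 → ℤ) b d) *
  ((![![0, 1, 1, 1], ![-1, 0, 1, 1], ![-1, -1, 0, 1], ![-1, -1, -1, 0]] :
    Fin 4 → Fin 4 → ℤ) c d)

set_option maxRecDepth 100000 in
theorem epsZ_perm : ∀ σ : Equiv.Perm (Fin 4),
    (Equiv.Perm.sign σ : ℤ) = epsZ (σ 0) (σ 1) (σ 2) (σ 3) := by
  decide

theorem epsZ_ne : ∀ a b c d : Fin 4, epsZ a b c d ≠ 0 → Function.Injective ![a, b, c, d] := by
  decide

theorem eps_eq (a b c d : Fin 4) : eps a b c d = (epsZ a b c d : ℝ) := by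
  unfold eps
  by_cases h : Function.Injective ![a, b, c, d]
  · have hb : Function.Bijective ![a, b, c, d] := Finite.injective_iff_bijective.mp h
    have key : ∀ σ : Equiv.Perm (Fin 4), (![a, b, c, d] = ⇑σ) ↔ σ = Equiv.ofBijective _ hb := by
      intro σ
      constructor
      · intro e
        ext i
        simp [← e]
      · intro e
        rw [e]
        rfl
    simp only [key]
    rw [Finset.sum_ite_eq' Finset.univ]
    simp [epsZ_perm]
  · have h0 : epsZ a b c d = 0 := by
      by_contra hne
      exact h (epsZ_ne _ _ _ _ hne)
    rw [h0]
    simp only [Int.cast_zero]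
    refine Finset.sum_eq_zero fun σ _ => ?_
    rw [if_neg]
    intro e
    exact h (e ▸ σ.injective)

theorem perm_sum (F : Fin 4 → Fin 4 → Fin 4 → Fin 4 → ℝ) :
    ∑ τ : Equiv.Perm (Fin 4), ((Equiv.Perm.sign τ : ℤ) : ℝ) * F (τ 0) (τ 1) (τ 2) (τ 3) =
      F 0 1 2 3 - F 0 1 3 2 - F 0 2 1 3 + F 0 2 3 1 + F 0 3 1 2 - F 0 3 2 1
      - F 1 0 2 3 + F 1 0 3 2 + F 1 2 0 3 - F 1 2 3 0 - F 1 3 0 2 + F 1 3 2 0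
      + F 2 0 1 3 - F 2 0 3 1 - F 2 1 0 3 + F 2 1 3 0 + F 2 3 0 1 - F 2 3 1 0
      - F 3 0 1 2 + F 3 0 2 1 + F 3 1 0 2 - F 3 1 2 0 - F 3 2 0 1 + F 3 2 1 0 := by
  have h : ∀ τ : Equiv.Perm (Fin 4),
      ((Equiv.Perm.sign τ : ℤ) : ℝ) * F (τ 0) (τ 1) (τ 2) (τ 3) =
      ∑ i : Fin 4, ∑ j : Fin 4, ∑ k : Fin 4, ∑ l : Fin 4,
        if ![i, j, k, l] = ⇑τ then ((Equiv.Perm.sign τ : ℤ) : ℝ) * F i j k l else 0 := by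
    intro τ
    have hh : ∀ i j k l : Fin 4, (![i, j, k, l] = ⇑τ) ↔ (i = τ 0 ∧ j = τ 1 ∧ k = τ 2 ∧ l = τ 3) := by
      intro i j k l
      simp [funext_iff, Fin.forall_fin_succ]
    simp only [hh, ite_and]
    simp
  simp only [h]
  rw [Finset.sum_comm]
  have h2 : ∀ i j k l : Fin 4, ∑ τ : Equiv.Perm (Fin 4),
      (if ![i, j, k, l] = ⇑τ then ((Equiv.Perm.sign τ : ℤ) : ℝ) * F i j k l else 0)
      = (epsZ i j k l : ℝ) * F i j k l := by
    intro i j k l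
    rw [← eps_eq, eps, Finset.sum_mul]
    exact Finset.sum_congr rfl fun τ _ => by split_ifs <;> simp
  have h3 : ∀ i : Fin 4, ∑ τ : Equiv.Perm (Fin 4), ∑ j : Fin 4, ∑ k : Fin 4, ∑ l : Fin 4,
      (if ![i, j, k, l] = ⇑τ then ((Equiv.Perm.sign τ : ℤ) : ℝ) * F i j k l else 0)
      = ∑ j : Fin 4, ∑ k : Fin 4, ∑ l : Fin 4, (epsZ i j k l : ℝ) * F i j k l := by
    intro i
    rw [Finset.sum_comm]
    refine Finset.sum_congr rfl fun j _ => ?_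
    rw [Finset.sum_comm]
    refine Finset.sum_congr rfl fun k _ => ?_
    rw [Finset.sum_comm]
    exact Finset.sum_congr rfl fun l _ => h2 i j k l
  simp only [h3]
  simp [Fin.sum_univ_four, epsZ]
  ring

theorem Evb_diag (G m : ℝ) (x : Fin 4 → ℝ) (d μ : Fin 4) :
    Evb G m x d μ = if d = μ then Evb G m x μ μ else 0 := by
  fin_cases d <;> fin_cases μ <;> simp [Evb]

theorem swl_eq (G m : ℝ) (x : Fin 4 → ℝ) (μ a c : Fin 4) :
    swl G m x μ a c = sw G m x μ a c * (![1, -1, -1, -1] : Fin 4 → ℝ) c := by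
  unfold swl eta
  fin_cases c <;> simp [Fin.sum_univ_four]

theorem collapse (G m : ℝ) (x : Fin 4 → ℝ) (μ ν ρ σ : Fin 4) :
    (∑ a : Fin 4, ∑ b : Fin 4, ∑ c : Fin 4, ∑ d : Fin 4, ∑ e : Fin 4,
        swl G m x μ a c * sw G m x ν c b * eps a b d e *
          Evb G m x d ρ * Evb G m x e σ) =
    (∑ a : Fin 4, ∑ b : Fin 4, (epsZ a b ρ σ : ℝ) *
      ∑ c : Fin 4, swl G m x μ a c * sw G m x ν c b) *
      (Evb G m x ρ ρ * Evb G m x σ σ) := by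
  simp only [Finset.sum_mul, Finset.mul_sum]
  refine Finset.sum_congr rfl fun a _ => Finset.sum_congr rfl fun b _ =>
    Finset.sum_congr rfl fun c _ => ?_
  have hz : ∀ d μ : Fin 4, d ≠ μ → Evb G m x d μ = 0 := fun d μ h => by
    rw [Evb_diag, if_neg h]
  rw [Finset.sum_eq_single ρ, Finset.sum_eq_single σ, eps_eq]
  · ring
  · intro e _ he
    rw [hz e σ he, mul_zero]
  · simp
  · intro d _ hd
    simp [hz d ρ hd]
  · simp

/-- for the Schwarzschild data, the Hamiltonian four-form
−(1/2) Σ ω^a{}_c ∧ ω^{cb} ∧ S_{ab} equals −sin θ · dt∧dr∧dθ∧dφ on U,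
expressed via its single coefficient. -/
theorem schwarzschild_hamiltonian_density (G m : ℝ) (hG : 0 < G) (hm : 0 ≤ m)
    (x : Fin 4 → ℝ) (hx : x ∈ Uchart G m) :
    -(1 / 4 : ℝ) * ∑ τ : Equiv.Perm (Fin 4), ((Equiv.Perm.sign τ : ℤ) : ℝ) *
      ∑ a : Fin 4, ∑ b : Fin 4, ∑ c : Fin 4, ∑ d : Fin 4, ∑ e : Fin 4,
        swl G m x (τ 0) a c * sw G m x (τ 1) c b * eps a b d e *
          Evb G m x d (τ 2) * Evb G m x e (τ 3)
      = -Real.sin (x 2) := by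
  obtain ⟨h1, h2, h3, h4⟩ := hx
  have hf : 0 < fS G m x := by
    unfold fS
    apply Real.sqrt_pos.mpr
    rw [sub_pos, div_lt_one h2]
    exact h1
  have hsq : x 1 * fS G m x ^ 2 = x 1 - 2 * G * m := by
    unfold fS
    rw [Real.sq_sqrt]
    · field_simp
    · rw [sub_nonneg, div_le_one h2]
      exact h1.le
  simp only [collapse]
  rw [perm_sum (fun μ ν ρ σ => (∑ a : Fin 4, ∑ b : Fin 4, (epsZ a b ρ σ : ℝ) *
      ∑ c : Fin 4, swl G m x μ a c * sw G m x ν c b) *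
      (Evb G m x ρ ρ * Evb G m x σ σ))]
  simp only [swl_eq, Fin.sum_univ_four]
  simp [epsZ, sw, Evb]
  field_simp
  ring_nf
  linear_combination 4 * Real.sin (x 2) * hsq
end

section
/- For the Schwarzschild data, the Einstein–Hilbert Lagrangian four-form (1/4) Σ_{a,b,c,d} ε_{abcd} R^{ab} ∧ e^c ∧ e^d vanishes identically on U (so the contact form restricts to zero on the vacuum solution). Explicitly, at every point of U, Σ_{τ ∈ S₄} sgn(τ) Σ_{a,b,c,d} ε_{abcd} · R^{ab}_{τ(0)τ(1)} · E^c_{τ(2)} · E^d_{τ(3)} = 0, where S₄ is the group of permutations of the coordinate indices {0,1,2,3} = (t,r,θ,φ). -/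
open scoped BigOperators

set_option linter.unusedSimpArgs false

lemma eps_perm (τ : Equiv.Perm (Fin 4)) (i j k l : Fin 4) :
    eps (τ i) (τ j) (τ k) (τ l) = ((Equiv.Perm.sign τ : ℤ) : ℝ) * eps i j k l := by
  unfold eps
  rw [← Equiv.sum_comp (Equiv.mulLeft τ), Finset.mul_sum]
  refine Finset.sum_congr rfl fun σ _ => ?_
  have h : (![τ i, τ j, τ k, τ l] = ⇑(Equiv.mulLeft τ σ)) ↔ (![i, j, k, l] = ⇑σ) := by
    simp [funext_iff, Fin.forall_fin_succ]
  simp only [h, mul_ite, mul_zero]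
  split_ifs
  · simp
  · rfl

lemma eps_zero (i j : Fin 4) (h : ¬ Function.Injective ![i, j, 2, 3]) : eps i j 2 3 = 0 := by
  unfold eps
  refine Finset.sum_eq_zero fun σ _ => ?_
  rw [if_neg]
  intro e
  exact h (e ▸ σ.injective)

lemma eps_0123 : eps 0 1 2 3 = 1 := by
  unfold eps
  rw [Finset.sum_eq_single 1]
  · rw [if_pos (by decide)]; simp
  · intro σ _ hs
    rw [if_neg]
    intro e
    apply hs
    ext i
    rw [← e]
    fin_cases i <;> rfl
  · simp

lemma eps_1023 : eps 1 0 2 3 = -1 := by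
  have := eps_perm (Equiv.swap 0 1) 0 1 2 3
  rw [eps_0123, Equiv.Perm.sign_swap (by decide)] at this
  have h2 : (Equiv.swap (0 : Fin 4) 1) 2 = 2 := by decide
  have h3 : (Equiv.swap (0 : Fin 4) 1) 3 = 3 := by decide
  rw [Equiv.swap_apply_left, Equiv.swap_apply_right, h2, h3] at this
  simpa using this

lemma Evb_ne (G m : ℝ) (x : Fin 4 → ℝ) (a b : Fin 4) (h : a ≠ b) : Evb G m x a b = 0 := by
  fin_cases a <;> fin_cases b <;> first | exact absurd rfl h | rfl

lemma lag_inner_sum (G m : ℝ) (x : Fin 4 → ℝ) (τ : Equiv.Perm (Fin 4)) :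
    ((Equiv.Perm.sign τ : ℤ) : ℝ) * ∑ a : Fin 4, ∑ b : Fin 4, ∑ c : Fin 4, ∑ d : Fin 4,
        eps a b c d * Rcurv G m x a b (τ 0) (τ 1) *
          Evb G m x c (τ 2) * Evb G m x d (τ 3) =
    (Rcurv G m x (τ 0) (τ 1) (τ 0) (τ 1) - Rcurv G m x (τ 1) (τ 0) (τ 0) (τ 1)) *
      Evb G m x (τ 2) (τ 2) * Evb G m x (τ 3) (τ 3) := by
  have h1 : ∀ a b : Fin 4, ∑ c : Fin 4, ∑ d : Fin 4,
        eps a b c d * Rcurv G m x a b (τ 0) (τ 1) *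
          Evb G m x c (τ 2) * Evb G m x d (τ 3) =
        eps a b (τ 2) (τ 3) * Rcurv G m x a b (τ 0) (τ 1) *
          Evb G m x (τ 2) (τ 2) * Evb G m x (τ 3) (τ 3) := by
    intro a b
    rw [Finset.sum_eq_single (τ 2), Finset.sum_eq_single (τ 3)]
    · intro d _ hd; rw [Evb_ne _ _ _ _ _ hd, mul_zero]
    · simp
    · intro c _ hc; simp [Evb_ne _ _ _ _ _ hc]
    · simp
  simp only [h1]
  rw [← Equiv.sum_comp τ]
  have h2 : ∀ i, ∑ b : Fin 4, eps (τ i) b (τ 2) (τ 3) * Rcurv G m x (τ i) b (τ 0) (τ 1) *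
          Evb G m x (τ 2) (τ 2) * Evb G m x (τ 3) (τ 3) =
       ∑ j : Fin 4, ((Equiv.Perm.sign τ : ℤ) : ℝ) * eps i j 2 3 * Rcurv G m x (τ i) (τ j) (τ 0) (τ 1) *
          Evb G m x (τ 2) (τ 2) * Evb G m x (τ 3) (τ 3) := by
    intro i
    rw [← Equiv.sum_comp τ]
    simp only [eps_perm]
  simp only [h2, Fin.sum_univ_four, eps_0123, eps_1023,
    eps_zero 0 0 (by decide), eps_zero 0 2 (by decide), eps_zero 0 3 (by decide),
    eps_zero 1 1 (by decide), eps_zero 1 2 (by decide), eps_zero 1 3 (by decide),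
    eps_zero 2 0 (by decide), eps_zero 2 1 (by decide), eps_zero 2 2 (by decide),
    eps_zero 2 3 (by decide),
    eps_zero 3 0 (by decide), eps_zero 3 1 (by decide), eps_zero 3 2 (by decide),
    eps_zero 3 3 (by decide)]
  have hs : ((Equiv.Perm.sign τ : ℤ) : ℝ) * ((Equiv.Perm.sign τ : ℤ) : ℝ) = 1 := by
    rcases Int.units_eq_one_or (Equiv.Perm.sign τ) with h | h <;> simp [h]
  linear_combination ((Rcurv G m x (τ 0) (τ 1) (τ 0) (τ 1) - Rcurv G m x (τ 1) (τ 0) (τ 0) (τ 1)) *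
      Evb G m x (τ 2) (τ 2) * Evb G m x (τ 3) (τ 3)) * hs

lemma sum_perm4 (F : Fin 4 → Fin 4 → Fin 4 → Fin 4 → ℝ) :
    ∑ τ : Equiv.Perm (Fin 4), F (τ 0) (τ 1) (τ 2) (τ 3) =
      F 0 1 2 3 + F 0 1 3 2 + F 0 2 1 3 + F 0 2 3 1 + F 0 3 1 2 + F 0 3 2 1 +
      F 1 0 2 3 + F 1 0 3 2 + F 1 2 0 3 + F 1 2 3 0 + F 1 3 0 2 + F 1 3 2 0 +
      F 2 0 1 3 + F 2 0 3 1 + F 2 1 0 3 + F 2 1 3 0 + F 2 3 0 1 + F 2 3 1 0 +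
      F 3 0 1 2 + F 3 0 2 1 + F 3 1 0 2 + F 3 1 2 0 + F 3 2 0 1 + F 3 2 1 0 := by
  have h : ∑ τ : Equiv.Perm (Fin 4), F (τ 0) (τ 1) (τ 2) (τ 3) =
      (((Finset.univ : Finset (Equiv.Perm (Fin 4))).val.map
        (fun τ => (τ 0, τ 1, τ 2, τ 3))).map (fun p => F p.1 p.2.1 p.2.2.1 p.2.2.2)).sum := by
    rw [Multiset.map_map]; rfl
  have h2 : ((Finset.univ : Finset (Equiv.Perm (Fin 4))).val.map
        (fun τ => (τ 0, τ 1, τ 2, τ 3))) =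
      {(0,1,2,3), (0,1,3,2), (0,2,1,3), (0,2,3,1), (0,3,1,2), (0,3,2,1),
       (1,0,2,3), (1,0,3,2), (1,2,0,3), (1,2,3,0), (1,3,0,2), (1,3,2,0),
       (2,0,1,3), (2,0,3,1), (2,1,0,3), (2,1,3,0), (2,3,0,1), (2,3,1,0),
       (3,0,1,2), (3,0,2,1), (3,1,0,2), (3,1,2,0), (3,2,0,1), (3,2,1,0)} := by
    decide +kernel
  rw [h, h2]
  simp only [Multiset.insert_eq_cons, Multiset.map_cons, Multiset.sum_cons,
    Multiset.map_singleton, Multiset.sum_singleton]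
  ring

lemma pd_const (μ : Fin 4) (c : ℝ) (x : Fin 4 → ℝ) : pd μ (fun _ => c) x = 0 := by
  simp [pd]

lemma hasF_coord (i : Fin 4) (x : Fin 4 → ℝ) :
    HasFDerivAt (fun y : Fin 4 → ℝ => y i)
      (ContinuousLinearMap.proj (R := ℝ) (φ := fun _ : Fin 4 => ℝ) i) x :=
  hasFDerivAt_apply i x

lemma hasF_comp (g : ℝ → ℝ) (g' : ℝ) (i : Fin 4) (x : Fin 4 → ℝ) (h : HasDerivAt g g' (x i)) :
    HasFDerivAt (fun y : Fin 4 → ℝ => g (y i))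
      (g' • ContinuousLinearMap.proj (R := ℝ) (φ := fun _ : Fin 4 => ℝ) i) x :=
  h.comp_hasFDerivAt x (hasF_coord i x)

lemma pd_comp (g : ℝ → ℝ) (g' : ℝ) (i μ : Fin 4) (x : Fin 4 → ℝ) (h : HasDerivAt g g' (x i)) :
    pd μ (fun y : Fin 4 → ℝ => g (y i)) x = if μ = i then g' else 0 := by
  rw [pd, (hasF_comp g g' i x h).fderiv]
  simp [Pi.single_apply, eq_comm]

lemma pd_mul (g k : ℝ → ℝ) (g' k' : ℝ) (μ : Fin 4) (x : Fin 4 → ℝ) (h : HasDerivAt g g' (x 1))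
    (h' : HasDerivAt k k' (x 2)) :
    pd μ (fun y : Fin 4 → ℝ => g (y 1) * k (y 2)) x =
      (if μ = 1 then g' * k (x 2) else 0) + (if μ = 2 then g (x 1) * k' else 0) := by
  rw [pd, ((hasF_comp g g' 1 x h).fun_mul (hasF_comp k k' 2 x h')).fderiv]
  fin_cases μ <;> simp [Pi.single_apply, mul_comm]

lemma pd_neg (F : (Fin 4 → ℝ) → ℝ) (μ : Fin 4) (x : Fin 4 → ℝ) :
    pd μ (fun y => - F y) x = - pd μ F x := by
  simp [pd, fderiv_fun_neg]

theorem schwarzschild_lagrangian_vanishes (G m : ℝ) (hG : 0 < G) (hm : 0 ≤ m)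
    (x : Fin 4 → ℝ) (hx : x ∈ Uchart G m) :
    ∑ τ : Equiv.Perm (Fin 4), ((Equiv.Perm.sign τ : ℤ) : ℝ) *
      ∑ a : Fin 4, ∑ b : Fin 4, ∑ c : Fin 4, ∑ d : Fin 4,
        eps a b c d * Rcurv G m x a b (τ 0) (τ 1) *
          Evb G m x c (τ 2) * Evb G m x d (τ 3) = 0 := by
  obtain ⟨h1, h2, -, -⟩ := hx
  have hpos : 0 < 1 - 2 * G * m / x 1 := by
    rw [sub_pos, div_lt_one h2]; exact h1
  have hne : x 1 ≠ 0 := h2.ne'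
  have hf : 0 < fS G m x := Real.sqrt_pos.2 hpos
  have hfsq : fS G m x ^ 2 = 1 - 2 * G * m / x 1 := Real.sq_sqrt hpos.le
  have hfd : HasDerivAt (fun r : ℝ => Real.sqrt (1 - 2 * G * m / r))
      (G * m / (x 1 ^ 2 * fS G m x)) (x 1) := by
    have := (((hasDerivAt_inv hne).const_mul (2 * G * m)).const_sub 1).sqrt
      (by simpa [div_eq_mul_inv] using hpos.ne')
    simp only [← div_eq_mul_inv] at this
    convert this using 1
    change _ = _ / (2 * fS G m x)
    field_simp
  have p1 : ∀ μ, pd μ (fun y => fS G m y) x = if μ = 1 then G * m / (x 1 ^ 2 * fS G m x) else 0 :=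
    fun μ => pd_comp _ _ 1 μ x hfd
  have p2 : ∀ μ, pd μ (fun y => fS G m y * Real.sin (y 2)) x =
      (if μ = 1 then G * m / (x 1 ^ 2 * fS G m x) * Real.sin (x 2) else 0) +
      (if μ = 2 then fS G m x * Real.cos (x 2) else 0) :=
    fun μ => pd_mul _ _ _ _ μ x hfd (Real.hasDerivAt_sin (x 2))
  have p3 : ∀ μ, pd μ (fun y => Real.cos (y 2)) x = if μ = 2 then - Real.sin (x 2) else 0 :=
    fun μ => pd_comp _ _ 2 μ x (Real.hasDerivAt_cos (x 2))
  have hd : ∀ c : ℝ, HasDerivAt (fun r : ℝ => c / r ^ 2) (-2 * c / x 1 ^ 3) (x 1) := by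
    intro c
    have := (hasDerivAt_const (x 1) c).div (hasDerivAt_pow 2 (x 1)) (pow_ne_zero 2 hne)
    refine HasDerivAt.congr_deriv this ?_
    rw [div_eq_div_iff (by positivity) (by positivity)]
    push_cast
    ring
  have p4 : ∀ c : ℝ, ∀ μ, pd μ (fun y => c / (y 1) ^ 2) x = if μ = 1 then -2 * c / x 1 ^ 3 else 0 :=
    fun c μ => pd_comp _ _ 1 μ x (hd c)
  simp only [lag_inner_sum]
  rw [sum_perm4 (fun a b c d => (Rcurv G m x a b a b - Rcurv G m x b a a b) *
      Evb G m x c c * Evb G m x d d)]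
  have hanti : ∀ a b μ ν, Rcurv G m x a b μ ν = - Rcurv G m x a b ν μ := by
    intro a b μ ν
    simp only [Rcurv, Fin.sum_univ_four]
    ring
  have r01 : Rcurv G m x 0 1 0 1 = -(2 * G * m / x 1 ^ 3) := by
    simp [Rcurv, swl, sw, eta, Fin.sum_univ_four, pd_const, pd_neg, p1, p2, p3, p4]
    try ring
  have r10 : Rcurv G m x 1 0 0 1 = -(-(2 * G * m / x 1 ^ 3)) := by
    simp [Rcurv, swl, sw, eta, Fin.sum_univ_four, pd_const, pd_neg, p1, p2, p3, p4]
    try ring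
  have r02 : Rcurv G m x 0 2 0 2 = G * m / x 1 ^ 2 * fS G m x := by
    simp [Rcurv, swl, sw, eta, Fin.sum_univ_four, pd_const, pd_neg, p1, p2, p3, p4]
    try ring
  have r20 : Rcurv G m x 2 0 0 2 = -(G * m / x 1 ^ 2 * fS G m x) := by
    simp [Rcurv, swl, sw, eta, Fin.sum_univ_four, pd_const, pd_neg, p1, p2, p3, p4]
    try ring
  have r03 : Rcurv G m x 0 3 0 3 = G * m / x 1 ^ 2 * (fS G m x * Real.sin (x 2)) := by
    simp [Rcurv, swl, sw, eta, Fin.sum_univ_four, pd_const, pd_neg, p1, p2, p3, p4]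
    try ring
  have r30 : Rcurv G m x 3 0 0 3 = -(G * m / x 1 ^ 2 * (fS G m x * Real.sin (x 2))) := by
    simp [Rcurv, swl, sw, eta, Fin.sum_univ_four, pd_const, pd_neg, p1, p2, p3, p4]
    try ring
  have r12 : Rcurv G m x 1 2 1 2 = G * m / (x 1 ^ 2 * fS G m x) := by
    simp [Rcurv, swl, sw, eta, Fin.sum_univ_four, pd_const, pd_neg, p1, p2, p3, p4]
    try ring
  have r21 : Rcurv G m x 2 1 1 2 = -(G * m / (x 1 ^ 2 * fS G m x)) := by
    simp [Rcurv, swl, sw, eta, Fin.sum_univ_four, pd_const, pd_neg, p1, p2, p3, p4]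
    try ring
  have r13 : Rcurv G m x 1 3 1 3 = G * m / (x 1 ^ 2 * fS G m x) * Real.sin (x 2) := by
    simp [Rcurv, swl, sw, eta, Fin.sum_univ_four, pd_const, pd_neg, p1, p2, p3, p4]
    try ring
  have r31 : Rcurv G m x 3 1 1 3 = -(G * m / (x 1 ^ 2 * fS G m x) * Real.sin (x 2)) := by
    simp [Rcurv, swl, sw, eta, Fin.sum_univ_four, pd_const, pd_neg, p1, p2, p3, p4]
    try ring
  have r23 : Rcurv G m x 2 3 2 3 = fS G m x ^ 2 * Real.sin (x 2) - Real.sin (x 2) := by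
    simp [Rcurv, swl, sw, eta, Fin.sum_univ_four, pd_const, pd_neg, p1, p2, p3, p4]
    try ring
  have r32 : Rcurv G m x 3 2 2 3 = -(fS G m x ^ 2 * Real.sin (x 2) - Real.sin (x 2)) := by
    simp [Rcurv, swl, sw, eta, Fin.sum_univ_four, pd_const, pd_neg, p1, p2, p3, p4]
    try ring
  simp only [r01, r10, hanti 0 1 1 0, hanti 1 0 1 0, r02, r20, hanti 0 2 2 0, hanti 2 0 2 0, r03, r30, hanti 0 3 3 0, hanti 3 0 3 0, r12, r21, hanti 1 2 2 1, hanti 2 1 2 1, r13, r31, hanti 1 3 3 1, hanti 3 1 3 1, r23, r32, hanti 2 3 3 2, hanti 3 2 3 2, hfsq]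
  simp [Evb]
  field_simp
  ring
end
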